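/- Let 0 < α < 1, let b > 0 and let 0 < β < 1/2. Then lim_{t→+∞} t^α · E_α(t^α(1 − b·t^{−2β})) / E_α(t^α) = 0. In particular, also E_α(t^α(1 − b·t^{−2β})) / E_α(t^α) → 0 as t → +∞. -/

import Mathlib

open Real

/-- The Mittag-Leffler function `E_α(r) = ∑ r^k / Γ(1+kα)`. -/
noncomputable def mittagLeffler (α r : ℝ) : ℝ :=
  ∑' k : ℕ, r ^ k / Real.Gamma (1 + k * α)

open Filter Topology

/-- Log-convexity bound for a shifted Gamma value. -/
lemma Real.Gamma_add_le_mul_rpow {x y : ℝ} {N : ℕ} (hx : 0 < x) (hy : 0 < y) (hyN : y < N) :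
    Real.Gamma (x + y) ≤ Real.Gamma x * (x + N) ^ y := by
  have hN : (0 : ℝ) < N := hy.trans hyN
  have hnat : ∀ n : ℕ, Real.Gamma (x + n) ≤ Real.Gamma x * (x + n) ^ n := by
    intro n
    induction n with
    | zero => simp
    | succ n ih =>
      have hxn : 0 < x + n := by positivity
      have hG := Real.Gamma_pos_of_pos hx
      calc Real.Gamma (x + (n + 1 : ℕ)) = (x + n) * Real.Gamma (x + n) := by
            rw [← Real.Gamma_add_one hxn.ne']; push_cast; ring_nf
        _ ≤ (x + (n + 1 : ℕ)) * (Real.Gamma x * (x + (n + 1 : ℕ)) ^ n) := by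
            have hle : x + (n : ℝ) ≤ x + (n + 1 : ℕ) := by push_cast; linarith
            have := Real.Gamma_pos_of_pos hxn
            refine mul_le_mul hle (ih.trans ?_) this.le (hxn.le.trans hle)
            gcongr
        _ = _ := by ring
  have hG := Real.Gamma_pos_of_pos hx
  have hθ : 0 < 1 - y / N := by
    rw [sub_pos, div_lt_one hN]; exact hyN
  have hxN : 0 < x + N := by positivity
  calc Real.Gamma (x + y) = Real.Gamma ((1 - y / N) * x + y / N * (x + N)) := by
        congr 1; field_simp; ring
    _ ≤ Real.Gamma x ^ (1 - y / N) * Real.Gamma (x + N) ^ (y / N) :=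
        Real.Gamma_mul_add_mul_le_rpow_Gamma_mul_rpow_Gamma hx hxN hθ (by positivity) (by ring)
    _ ≤ Real.Gamma x ^ (1 - y / N) * (Real.Gamma x * (x + N) ^ N) ^ (y / N) := by
        have := (Real.Gamma_pos_of_pos hxN).le
        gcongr
        exact hnat N
    _ = Real.Gamma x * (x + N) ^ y := by
        rw [Real.mul_rpow hG.le (by positivity), ← mul_assoc, ← Real.rpow_add hG,
          ← Real.rpow_natCast, ← Real.rpow_mul hxN.le]
        congr 1
        · simp
        · congr 1; field_simp

lemma mittagLeffler_Gamma_pos {α : ℝ} (hα : 0 < α) (k : ℕ) : 0 < Real.Gamma (1 + k * α) :=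
  Real.Gamma_pos_of_pos (by positivity)

lemma mittagLeffler_summable {α : ℝ} (hα : 0 < α) (hα1 : α < 1) {r : ℝ} (hr : 0 ≤ r) :
    Summable fun k : ℕ => r ^ k / Real.Gamma (1 + k * α) := by
  have hx : Tendsto (fun k : ℕ => 1 + (k : ℝ) * α) atTop atTop :=
    tendsto_atTop_add_const_left _ _ (tendsto_natCast_atTop_atTop.atTop_mul_const hα)
  have hlim : Tendsto (fun k : ℕ => r * (3 * (1 + (k : ℝ) * α) ^ (-α))) atTop (𝓝 0) := by
    simpa using (((tendsto_rpow_neg_atTop hα).comp hx).const_mul 3).const_mul r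
  refine summable_of_ratio_norm_eventually_le (r := 1 / 2) (by norm_num) ?_
  filter_upwards [hlim.eventually_le_const (show (0 : ℝ) < 1 / 2 by norm_num)] with k hk
  have hG := mittagLeffler_Gamma_pos hα k
  have hG' := mittagLeffler_Gamma_pos hα (k + 1)
  rw [Real.norm_of_nonneg (by positivity), Real.norm_of_nonneg (by positivity)]
  set x : ℝ := 1 + k * α with hxdef
  have hx1 : 1 ≤ x := by rw [hxdef]; linarith [show 0 ≤ (k : ℝ) * α by positivity]
  have hx0 : 0 < x := by linarith
  have hxs : 1 + ((k + 1 : ℕ) : ℝ) * α = x + α := by rw [hxdef]; push_cast; ring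
  rw [hxs] at hG' ⊢
  have hbound : Real.Gamma x ≤ Real.Gamma (x + α) * (3 * x ^ (-α)) := by
    have h := Real.Gamma_add_le_mul_rpow (x := x + α) (y := 1 - α) (N := 1)
      (by linarith) (by linarith) (by push_cast; linarith)
    rw [show x + α + (1 - α) = x + 1 by ring, Real.Gamma_add_one hx0.ne'] at h
    have h3 : (x + α + (1 : ℕ)) ^ (1 - α) ≤ 3 * x ^ (1 - α) := by
      calc (x + α + (1 : ℕ)) ^ (1 - α) ≤ (3 * x) ^ (1 - α) := by
            apply Real.rpow_le_rpow
            · positivity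
            · push_cast; linarith
            · linarith
        _ = 3 ^ (1 - α) * x ^ (1 - α) := Real.mul_rpow (by norm_num) hx0.le
        _ ≤ 3 * x ^ (1 - α) := by
            gcongr
            simpa using Real.rpow_le_rpow_of_exponent_le (show (1 : ℝ) ≤ 3 by norm_num)
              (show 1 - α ≤ 1 by linarith)
    have h4 : x ^ (1 - α) = x * x ^ (-α) := by
      rw [sub_eq_add_neg, Real.rpow_add hx0, Real.rpow_one]
    have h5 : x * Real.Gamma x ≤ x * (Real.Gamma (x + α) * (3 * x ^ (-α))) := by
      calc x * Real.Gamma x ≤ Real.Gamma (x + α) * (3 * x ^ (1 - α)) := h.trans (by gcongr)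
        _ = _ := by rw [h4]; ring
    exact le_of_mul_le_mul_left h5 hx0
  rw [div_le_iff₀ hG']
  have hrk : 0 ≤ r ^ k / Real.Gamma x := by positivity
  calc r ^ (k + 1) = r ^ k / Real.Gamma x * (r * Real.Gamma x) := by field_simp; ring
    _ ≤ r ^ k / Real.Gamma x * (r * (Real.Gamma (x + α) * (3 * x ^ (-α)))) := by gcongr
    _ = r ^ k / Real.Gamma x * (r * (3 * x ^ (-α)) * Real.Gamma (x + α)) := by ring
    _ ≤ r ^ k / Real.Gamma x * (1 / 2 * Real.Gamma (x + α)) := by gcongr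
    _ = _ := by ring

lemma mittagLeffler_nonneg {α r : ℝ} (hα : 0 < α) (hr : 0 ≤ r) : 0 ≤ mittagLeffler α r :=
  tsum_nonneg fun k => div_nonneg (pow_nonneg hr k) (mittagLeffler_Gamma_pos hα k).le

/-- Contraction of the argument by `1 - ε`: terms of index at least `K` gain a factor
`exp (-(ε * K))`, while terms of index below `K` are compared with the terms `m` places later. -/
lemma mittagLeffler_mul_one_sub_le {α r ε K : ℝ} {m N : ℕ} (hα : 0 < α) (hα1 : α < 1)
    (hr : 0 < r) (hε : 0 ≤ ε) (hε1 : ε ≤ 1) (hK : 0 ≤ K) (hm : 0 < m) (hmN : m * α < N) :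
    mittagLeffler α (r * (1 - ε)) ≤
      (Real.exp (-(ε * K)) + (1 + K * α + N) ^ (m * α) / r ^ m) * mittagLeffler α r := by
  have hS := mittagLeffler_summable hα hα1 hr.le
  have hS' := (summable_nat_add_iff m).2 hS
  have hG := mittagLeffler_Gamma_pos hα
  have hm0 : (0 : ℝ) < m := by exact_mod_cast hm
  set R : ℝ := (1 + K * α + N) ^ (m * α) / r ^ m with hR
  have hR0 : 0 ≤ R := by positivity
  have hterm : ∀ k : ℕ, (r * (1 - ε)) ^ k / Real.Gamma (1 + k * α) ≤
      Real.exp (-(ε * K)) * (r ^ k / Real.Gamma (1 + k * α)) +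
        R * (r ^ (k + m) / Real.Gamma (1 + (k + m : ℕ) * α)) := by
    intro k
    have hGk := hG k
    have hGm := hG (k + m)
    have h1ε : 0 ≤ 1 - ε := by linarith
    rcases le_total K k with hk | hk
    · have hpow : (1 - ε) ^ k ≤ Real.exp (-(ε * K)) := by
        calc (1 - ε) ^ k ≤ Real.exp (-ε) ^ k := by
              gcongr; exact Real.one_sub_le_exp_neg ε
          _ = Real.exp (k * -ε) := (Real.exp_nat_mul _ _).symm
          _ ≤ _ := by
              apply Real.exp_le_exp.2
              nlinarith
      calc (r * (1 - ε)) ^ k / Real.Gamma (1 + k * α)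
          = (1 - ε) ^ k * (r ^ k / Real.Gamma (1 + k * α)) := by rw [mul_pow]; ring
        _ ≤ Real.exp (-(ε * K)) * (r ^ k / Real.Gamma (1 + k * α)) := by gcongr
        _ ≤ _ := le_add_of_nonneg_right (by positivity)
    · have hpow : (r * (1 - ε)) ^ k ≤ r ^ k := by
        apply pow_le_pow_left₀ (by positivity)
        nlinarith
      have hΓ : Real.Gamma (1 + (k + m : ℕ) * α) ≤
          Real.Gamma (1 + k * α) * (1 + K * α + N) ^ (m * α) := by
        calc Real.Gamma (1 + (k + m : ℕ) * α) = Real.Gamma (1 + k * α + m * α) := by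
              push_cast; ring_nf
          _ ≤ Real.Gamma (1 + k * α) * (1 + k * α + N) ^ (m * α) :=
              Real.Gamma_add_le_mul_rpow (by positivity) (by positivity) hmN
          _ ≤ _ := by gcongr
      calc (r * (1 - ε)) ^ k / Real.Gamma (1 + k * α) ≤ r ^ k / Real.Gamma (1 + k * α) := by
            gcongr
        _ ≤ R * (r ^ (k + m) / Real.Gamma (1 + (k + m : ℕ) * α)) := by
            rw [hR, pow_add, div_mul_div_comm, div_le_div_iff₀ hGk (by positivity)]
            calc r ^ k * (r ^ m * Real.Gamma (1 + (k + m : ℕ) * α))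
                ≤ r ^ k * (r ^ m * (Real.Gamma (1 + k * α) * (1 + K * α + N) ^ (m * α))) := by
                  gcongr
              _ = _ := by ring
        _ ≤ _ := le_add_of_nonneg_left (by positivity)
  have htail : ∑' k : ℕ, r ^ (k + m) / Real.Gamma (1 + (k + m : ℕ) * α) ≤ mittagLeffler α r := by
    rw [mittagLeffler, ← hS.sum_add_tsum_nat_add m]
    refine le_add_of_nonneg_left (Finset.sum_nonneg fun k _ => ?_)
    have := hG k
    positivity
  calc mittagLeffler α (r * (1 - ε))
      ≤ ∑' k : ℕ, (Real.exp (-(ε * K)) * (r ^ k / Real.Gamma (1 + k * α)) +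
        R * (r ^ (k + m) / Real.Gamma (1 + (k + m : ℕ) * α))) :=
        (mittagLeffler_summable hα hα1 (mul_nonneg hr.le (by linarith))).tsum_le_tsum hterm
          ((hS.mul_left _).add (hS'.mul_left _))
    _ = Real.exp (-(ε * K)) * mittagLeffler α r +
        R * ∑' k : ℕ, r ^ (k + m) / Real.Gamma (1 + (k + m : ℕ) * α) := by
        rw [(hS.mul_left _).tsum_add (hS'.mul_left _), tsum_mul_left, tsum_mul_left]
        rfl
    _ ≤ Real.exp (-(ε * K)) * mittagLeffler α r + R * mittagLeffler α r := by gcongr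
    _ = _ := by ring

lemma tendsto_rpow_mul_exp_neg_mul_rpow (a : ℝ) {b c : ℝ} (hb : 0 < b) (hc : 0 < c) :
    Tendsto (fun t : ℝ => t ^ a * Real.exp (-(b * t ^ c))) atTop (𝓝 0) := by
  refine ((tendsto_rpow_mul_exp_neg_mul_atTop_nhds_zero (a / c) b hb).comp
    (tendsto_rpow_atTop hc)).congr' ?_
  filter_upwards [eventually_gt_atTop 0] with t ht
  simp only [Function.comp_apply]
  rw [← Real.rpow_mul ht.le, mul_div_cancel₀ _ hc.ne', neg_mul]

theorem mittagLeffler_ratio_tendsto_zero (α b β : ℝ) (hα : 0 < α) (hα1 : α < 1)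
    (hb : 0 < b) (hβ : 0 < β) (hβ' : β < 1 / 2) :
    Filter.Tendsto
      (fun t : ℝ => t ^ α * mittagLeffler α (t ^ α * (1 - b * t ^ (-(2 * β)))) /
        mittagLeffler α (t ^ α))
      Filter.atTop (nhds 0) ∧
    Filter.Tendsto
      (fun t : ℝ => mittagLeffler α (t ^ α * (1 - b * t ^ (-(2 * β)))) /
        mittagLeffler α (t ^ α))
      Filter.atTop (nhds 0) := by
  obtain ⟨γ, hγ, hγ1⟩ := exists_between (show 2 * β < 1 by linarith)
  obtain ⟨m, hm⟩ := exists_nat_gt (1 / (1 - γ))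
  obtain ⟨N, hN⟩ := exists_nat_gt (m * α)
  have hγ' : 0 < 1 - γ := by linarith
  have hγm : 1 < m * (1 - γ) := by rwa [div_lt_iff₀ hγ'] at hm
  have hm0 : 0 < m := by
    have : (0 : ℝ) < m := lt_trans (by positivity) hm
    exact_mod_cast this
  set C : ℝ := (1 + α + N) ^ (m * α)
  have hbound : Tendsto (fun t : ℝ => t ^ α * Real.exp (-(b * t ^ (γ - 2 * β))) +
      C * t ^ (-(α * (m * (1 - γ) - 1)))) atTop (𝓝 0) := by
    simpa using (tendsto_rpow_mul_exp_neg_mul_rpow α hb (sub_pos.2 hγ)).add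
      ((tendsto_rpow_neg_atTop (mul_pos hα (sub_pos.2 hγm))).const_mul C)
  have hε : ∀ᶠ t : ℝ in atTop, b * t ^ (-(2 * β)) ≤ 1 := by
    have h := (tendsto_rpow_neg_atTop (show 0 < 2 * β by linarith)).const_mul b
    rw [mul_zero] at h
    exact h.eventually_le_const one_pos
  have hmain : Tendsto (fun t : ℝ => t ^ α * mittagLeffler α (t ^ α * (1 - b * t ^ (-(2 * β)))) /
      mittagLeffler α (t ^ α)) atTop (𝓝 0) := by
    refine squeeze_zero' ?_ ?_ hbound
    · filter_upwards [hε, eventually_ge_atTop 1] with t hεt ht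
      have ht0 : 0 < t := by linarith
      have h1 : 0 ≤ 1 - b * t ^ (-(2 * β)) := by linarith
      have := mittagLeffler_nonneg hα (r := t ^ α) (by positivity)
      have := mittagLeffler_nonneg hα (r := t ^ α * (1 - b * t ^ (-(2 * β)))) (by positivity)
      positivity
    · filter_upwards [hε, eventually_ge_atTop 1] with t hεt ht
      have ht0 : 0 < t := by linarith
      have hE := mittagLeffler_nonneg hα (r := t ^ α) (by positivity)
      refine div_le_of_le_mul₀ hE (by positivity) ?_
      have hle := mittagLeffler_mul_one_sub_le (K := t ^ γ) hα hα1 (Real.rpow_pos_of_pos ht0 α)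
        (by positivity) hεt (by positivity) hm0 hN
      have hexp : b * t ^ (-(2 * β)) * t ^ γ = b * t ^ (γ - 2 * β) := by
        rw [mul_assoc, ← Real.rpow_add ht0]; ring_nf
      have hpow : (1 + t ^ γ * α + N) ^ (m * α) / (t ^ α) ^ m ≤
          C * t ^ (-(α * (m * (1 - γ)))) := by
        have htγ : 1 ≤ t ^ γ := Real.one_le_rpow ht (by linarith)
        rw [div_le_iff₀ (by positivity)]
        calc (1 + t ^ γ * α + N) ^ (m * α) ≤ ((1 + α + N) * t ^ γ) ^ (m * α) := by
              gcongr
              nlinarith [show (0 : ℝ) ≤ N by positivity]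
          _ = C * t ^ (γ * (m * α)) := by
              rw [Real.mul_rpow (by positivity) (by positivity), Real.rpow_mul ht0.le γ]
          _ = C * (t ^ (-(α * (m * (1 - γ)))) * t ^ (α * m)) := by
              rw [← Real.rpow_add ht0]; ring_nf
          _ = _ := by rw [Real.rpow_mul ht0.le α, Real.rpow_natCast]; ring
      have hsplit : t ^ (-(α * (m * (1 - γ) - 1))) = t ^ α * t ^ (-(α * (m * (1 - γ)))) := by
        rw [← Real.rpow_add ht0]; ring_nf
      rw [hexp] at hle
      calc t ^ α * mittagLeffler α (t ^ α * (1 - b * t ^ (-(2 * β))))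
          ≤ t ^ α * ((Real.exp (-(b * t ^ (γ - 2 * β))) + C * t ^ (-(α * (m * (1 - γ))))) *
            mittagLeffler α (t ^ α)) := by
            gcongr
            exact hle.trans (by gcongr)
        _ = _ := by rw [hsplit]; ring
  refine ⟨hmain, ?_⟩
  have h := (tendsto_rpow_neg_atTop hα).mul hmain
  rw [mul_zero] at h
  refine h.congr' ?_
  filter_upwards [eventually_gt_atTop 0] with t ht
  rw [← mul_div_assoc, ← mul_assoc, ← Real.rpow_add ht, neg_add_cancel, Real.rpow_zero, one_mul]
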